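/- Let E be a complex Banach space, A ∈ 𝒫(θ_A) and B ∈ 𝒫(θ_B) resolvent commuting with θ_A > θ_B and θ_A + θ_B > π, and let x = (1/(2πi)) ∫_{Γ_{θ_B}} (A−z)⁻¹ (B+z)⁻¹ y dz. If y ∈ (E,𝒟(A))_{θ,p} or y ∈ (E,𝒟(B))_{θ,p} for some θ ∈ (0,1) and some p ∈ [1,∞), then x ∈ 𝒟(A) ∩ 𝒟(B) and (A+B)x = y. -/

import Mathlib

open Complex MeasureTheory Set Filter

noncomputable section

variable {E : Type*} [NormedAddCommGroup E] [NormedSpace ℂ E]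

/-- `R ∈ ℒ(E)` is a (two-sided) bounded inverse of `A + lam`. -/
structure IsResolventAt (A : E →ₗ.[ℂ] E) (lam : ℂ) (R : E →L[ℂ] E) : Prop where
  mem : ∀ y, R y ∈ A.domain
  right_inv : ∀ y, A ⟨R y, mem y⟩ + lam • R y = y
  left_inv : ∀ x : A.domain, R (A x + lam • (x : E)) = x

/-- The sector `S_θ = {z : |arg z| ≤ θ} ∪ {0}` (note `arg 0 = 0`). -/
def Sector (θ : ℝ) : Set ℂ := {z : ℂ | |z.arg| ≤ θ}

/-- `A ∈ 𝒫_K(θ)` with resolvent family `R`. -/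
structure IsSectorial (A : E →ₗ.[ℂ] E) (θ : ℝ) (R : ℂ → E →L[ℂ] E) (K : ℝ) : Prop where
  one_le : 1 ≤ K
  closed : A.IsClosed
  res : ∀ z ∈ Sector θ, IsResolventAt A z (R z)
  bound : ∀ z ∈ Sector θ, (1 + ‖z‖) * ‖R z‖ ≤ K

section Contours

variable {F : Type*} [NormedAddCommGroup F] [NormedSpace ℂ F]

/-- Integral over the ray `{ r e^{iθ} : r ≥ ρ }`, oriented outwards. -/
def rayIntegral (θ ρ : ℝ) (f : ℂ → F) : F :=
  ∫ r in Ioi ρ, Complex.exp (θ * I) • f (r * Complex.exp (θ * I))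

/-- Integral over the positively oriented contour `Γ_θ = { r e^{± i θ} : r ≥ 0 }`
(coming in along the ray `e^{-iθ}` and leaving along `e^{iθ}`). -/
def gammaIntegral (θ : ℝ) (f : ℂ → F) : F :=
  rayIntegral θ 0 f - rayIntegral (-θ) 0 f

/-- Integral over the arc `{ ρ e^{iφ} : θ₁ ≤ φ ≤ θ₂ }`, counterclockwise. -/
def arcIntegral (ρ θ₁ θ₂ : ℝ) (f : ℂ → F) : F :=
  ∫ φ in θ₁..θ₂, (I * ρ * Complex.exp (φ * I)) • f (ρ * Complex.exp (φ * I))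

/-- Integral over the positively oriented contour
`Γ_{ρ,θ} = { ρ e^{iφ} : θ ≤ φ ≤ 2π-θ } ∪ { r e^{±iθ} : r ≥ ρ }`. -/
def gammaRhoIntegral (ρ θ : ℝ) (f : ℂ → F) : F :=
  rayIntegral θ ρ f - rayIntegral (-θ) ρ f - arcIntegral ρ θ (2 * Real.pi - θ) f

/-- Integral over the reflected contour `-Γ_{ρ,θ}`. -/
def gammaRhoNegIntegral (ρ θ : ℝ) (f : ℂ → F) : F :=
  - gammaRhoIntegral ρ θ fun lam => f (-lam)

/-- Integral over the vertical line `iℝ - c`, oriented upwards. -/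
def lineIntegral (c : ℝ) (f : ℂ → F) : F :=
  ∫ t : ℝ, I • f (t * I - c)

end Contours

/-- The operator `𝒦 = (1/(2πi)) ∫_{Γ_{θ_B}} (A-z)⁻¹ (B+z)⁻¹ dz` applied to `y`;
here `RA (-z)` plays the role of `(A-z)⁻¹` and `RB z` of `(B+z)⁻¹`. -/
def Kop (RA RB : ℂ → E →L[ℂ] E) (θB : ℝ) (y : E) : E :=
  (2 * Real.pi * I : ℂ)⁻¹ • gammaIntegral θB fun z => RA (-z) (RB z y)

/-- The `K`-functional of the couple `(E, 𝒟(A))`, where `𝒟(A)` carries the graph norm. -/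
def interpK (A : E →ₗ.[ℂ] E) (t : ℝ) (x : E) : ℝ :=
  ⨅ w : A.domain, (‖x - (w : E)‖ + t * (‖(w : E)‖ + ‖A w‖))

/-- Membership in the real interpolation space `(E, 𝒟(A))_{θ,q}`. -/
def MemInterp (A : E →ₗ.[ℂ] E) (θ q : ℝ) (x : E) : Prop :=
  ∫⁻ t in Ioi (0 : ℝ), ENNReal.ofReal ((t ^ (-θ) * interpK A t x) ^ q / t) < ⊤

/-- Resolvent commutation for two sectorial operators. -/
def ResolventCommuting (RA RB : ℂ → E →L[ℂ] E) (θA θB : ℝ) : Prop :=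
  ∃ lam ∈ Sector θA, ∃ mu ∈ Sector θB, Commute (RA lam) (RB mu)


/-!
On `Γ_{θ_B}` the resolvent equations give, with `G = (A - z)⁻¹ (B + z)⁻¹ y`,

  `(A⁻¹ + B⁻¹) G = ((A - z)⁻¹ B⁻¹ y - (B + z)⁻¹ A⁻¹ y) / z`.

The two terms on the right are holomorphic in complementary sectors, and they must be integrated
separately, as limits of truncated integrals since neither is absolutely integrable at the vertex.
In the coordinate `z = e^w`, Cauchy's theorem on rectangles in a horizontal strip evaluates them as
`2i (π - θ_B) A⁻¹ B⁻¹ y` and `-2i θ_B A⁻¹ B⁻¹ y`. Hence `A⁻¹ x + B⁻¹ x = A⁻¹ B⁻¹ y` for every `y`.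

If `y` is regular with respect to `A`, then `A (A - z)⁻¹ y = O(|z|^{-θ})`, so that `A⁻¹` can be
pulled out of the integral, and `x ∈ 𝒟(A)`. The identity above then puts `x` into `𝒟(B)` as well
and can be multiplied by `A` and `B`. The roles of `A` and `B` are symmetric in this step.
-/

open Bornology Topology

section Sector

variable {θ ψ : ℝ} {z w : ℂ}

lemma mem_sector : z ∈ Sector θ ↔ |z.arg| ≤ θ := Iff.rfl

lemma zero_mem_sector (hθ : 0 ≤ θ) : (0 : ℂ) ∈ Sector θ := by
  rwa [mem_sector, Complex.arg_zero, abs_zero]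

lemma arg_exp_of_abs_im_lt (hw : |w.im| < Real.pi) : (Complex.exp w).arg = w.im := by
  rw [← Complex.log_im, Complex.log_exp (abs_lt.1 hw).1 (abs_lt.1 hw).2.le]

lemma exp_mem_sector (hθ : θ < Real.pi) (hw : |w.im| ≤ θ) : Complex.exp w ∈ Sector θ := by
  rwa [mem_sector, arg_exp_of_abs_im_lt (hw.trans_lt hθ)]

lemma abs_arg_neg (hz : z ≠ 0) : |(-z).arg| = Real.pi - |z.arg| := by
  rw [← Complex.angle_one_left (neg_ne_zero.2 hz), InnerProductGeometry.angle_neg_right,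
    Complex.angle_one_left hz]

/-- The contour `Γ_θ` without its vertex, as the image of the two lines `Im w = ±θ` under the
exponential; the vertex is negligible for integrals along `Γ_θ`. -/
def gammaContour (θ : ℝ) : Set ℂ := Complex.exp '' {w | |w.im| = |θ|}

lemma exp_mem_gammaContour (s : ℝ) {φ : ℝ} (hφ : |φ| = |θ|) :
    Complex.exp (s + φ * I) ∈ gammaContour θ :=
  ⟨s + φ * I, by simpa using hφ, rfl⟩

lemma ray_mem_gammaContour {r φ : ℝ} (hr : 0 < r) (hφ : |φ| = |θ|) :
    (r : ℂ) * Complex.exp (φ * I) ∈ gammaContour θ := by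
  rw [← Real.exp_log hr, Complex.ofReal_exp, ← Complex.exp_add]
  exact exp_mem_gammaContour _ hφ

lemma gammaContour_subset_sector (hθ₀ : 0 ≤ θ) (hθ : θ < Real.pi) :
    gammaContour θ ⊆ Sector θ := by
  rintro _ ⟨w, hw, rfl⟩
  exact exp_mem_sector hθ (hw.trans_le (abs_of_nonneg hθ₀).le)

lemma neg_mem_sector_of_mem_gammaContour (hθ : |θ| < Real.pi) (hψ : Real.pi ≤ ψ + θ)
    (hz : z ∈ gammaContour θ) : -z ∈ Sector ψ := by
  obtain ⟨w, hw, rfl⟩ := hz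
  have hw : |w.im| = |θ| := hw
  rw [mem_sector, abs_arg_neg (Complex.exp_ne_zero w), arg_exp_of_abs_im_lt (hw.trans_lt hθ), hw]
  linarith [le_abs_self θ]

end Sector

/-- Absolute integrability of `f` along both rays of `Γ_θ`. -/
def GammaIntegrable {F : Type*} [NormedAddCommGroup F] (θ : ℝ) (f : ℂ → F) : Prop :=
  ∀ φ : ℝ, |φ| = |θ| → IntegrableOn (fun r : ℝ => f (r * Complex.exp (φ * I))) (Ioi 0)

lemma GammaIntegrable.of_norm_le {F : Type*} [NormedAddCommGroup F] {f : ℂ → F} {θ δ C : ℝ}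
    (hδ : 0 < δ) (hf : ContinuousOn f (gammaContour θ))
    (hb : ∀ z ∈ gammaContour θ, ‖f z‖ ≤ C * (1 + ‖z‖) ^ (-1 - δ)) : GammaIntegrable θ f := by
  intro φ hφ
  have hray : MapsTo (fun r : ℝ => (r : ℂ) * Complex.exp (φ * I)) (Ioi 0) (gammaContour θ) :=
    fun _ hr => ray_mem_gammaContour hr hφ
  have hbound : IntegrableOn (fun r : ℝ => C * (r + 1) ^ (-1 - δ)) (Ioi 0) :=
    (integrableOn_add_rpow_Ioi_of_lt (by linarith) (by norm_num)).const_mul C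
  refine hbound.mono' ((hf.comp (by fun_prop) hray).aestronglyMeasurable measurableSet_Ioi)
    ((ae_restrict_iff' measurableSet_Ioi).2 (.of_forall fun r hr => ?_))
  have hnorm : ‖(r : ℂ) * Complex.exp (φ * I)‖ = r := by
    rw [norm_mul, Complex.norm_exp_ofReal_mul_I, mul_one, Complex.norm_of_nonneg (le_of_lt hr)]
  simpa only [hnorm, add_comm] using hb _ (hray hr)

section Contours

variable {F G : Type*} [NormedAddCommGroup F] [NormedSpace ℂ F]
  [NormedAddCommGroup G] [NormedSpace ℂ G] {θ φ : ℝ} {f g : ℂ → F}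

lemma gammaIntegral_congr (h : EqOn f g (gammaContour θ)) :
    gammaIntegral θ f = gammaIntegral θ g := by
  unfold gammaIntegral rayIntegral
  congr 1 <;> refine setIntegral_congr_fun measurableSet_Ioi fun r hr => ?_
  · simp only [h (ray_mem_gammaContour hr rfl)]
  · simp only [h (ray_mem_gammaContour hr (abs_neg θ))]

lemma GammaIntegrable.clm_comp (hf : GammaIntegrable θ f) (L : F →L[ℂ] G) :
    GammaIntegrable θ fun z => L (f z) :=
  fun φ hφ => L.integrable_comp (hf φ hφ)

lemma GammaIntegrable.clm_apply {S : ℂ → F →L[ℂ] G} {δ K C : ℝ} (hδ : 0 < δ)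
    (hS : ContinuousOn S (gammaContour θ)) (hf : ContinuousOn f (gammaContour θ))
    (hSK : ∀ z ∈ gammaContour θ, ‖S z‖ ≤ K / (1 + ‖z‖))
    (hfC : ∀ z ∈ gammaContour θ, ‖f z‖ ≤ C * (1 + ‖z‖) ^ (-δ)) :
    GammaIntegrable θ fun z => S z (f z) := by
  refine .of_norm_le (C := K * C) hδ (hS.clm_apply hf) fun z hz => ?_
  calc ‖S z (f z)‖ ≤ ‖S z‖ * ‖f z‖ := (S z).le_opNorm _
    _ ≤ K / (1 + ‖z‖) * (C * (1 + ‖z‖) ^ (-δ)) :=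
        mul_le_mul (hSK z hz) (hfC z hz) (norm_nonneg _) ((norm_nonneg _).trans (hSK z hz))
    _ = K * C * (1 + ‖z‖) ^ (-1 - δ) := by
        rw [sub_eq_add_neg, Real.rpow_add (by positivity), Real.rpow_neg_one]
        ring

lemma map_rayIntegral [CompleteSpace F] [CompleteSpace G] (L : F →L[ℂ] G) {ρ : ℝ}
    (hf : IntegrableOn (fun r : ℝ => f (r * Complex.exp (θ * I))) (Ioi ρ)) :
    L (rayIntegral θ ρ f) = rayIntegral θ ρ fun z => L (f z) :=
  (L.integral_comp_comm (hf.smul (Complex.exp (θ * I)))).symm.trans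
    (by simp only [rayIntegral, map_smul, Pi.smul_apply])

lemma map_gammaIntegral [CompleteSpace F] [CompleteSpace G] (L : F →L[ℂ] G)
    (hf : GammaIntegrable θ f) : L (gammaIntegral θ f) = gammaIntegral θ fun z => L (f z) := by
  rw [gammaIntegral, map_sub, map_rayIntegral L (hf θ rfl),
    map_rayIntegral L (hf (-θ) (abs_neg θ)), gammaIntegral]

lemma tendsto_intervalIntegral_exp_smul {H : Type*} [NormedAddCommGroup H] [NormedSpace ℝ H]
    {h : ℝ → H} (hh : IntegrableOn h (Ioi 0)) :
    Tendsto (fun n : ℝ => ∫ s in (-n)..n, Real.exp s • h (Real.exp s)) atTop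
      (𝓝 (∫ r in Ioi 0, h r)) := by
  have himage : Real.exp '' univ = Ioi 0 := by rw [image_univ, Real.range_exp]
  have hderiv : ∀ s ∈ univ, HasDerivWithinAt Real.exp (Real.exp s) univ s :=
    fun s _ => (Real.hasDerivAt_exp s).hasDerivWithinAt
  have hinj := Real.exp_injective.injOn (s := univ)
  rw [← himage, integrableOn_image_iff_integrableOn_abs_deriv_smul .univ hderiv hinj,
    integrableOn_univ] at hh
  rw [← himage, integral_image_eq_integral_abs_deriv_smul .univ hderiv hinj, setIntegral_univ]
  simp only [Real.abs_exp] at hh ⊢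
  exact intervalIntegral_tendsto_integral hh tendsto_neg_atTop_atBot tendsto_id

/-- The integral of `f(z) dz/z` along the part `e⁻ⁿ ≤ |z| ≤ eⁿ` of `Γ_θ`, in the coordinates
`z = e^{s ± iθ}`. Its limit as `n → ∞` may exist without `f(z)/z` being absolutely integrable
along `Γ_θ`. -/
def truncGammaIntegral (θ n : ℝ) (f : ℂ → F) : F :=
  ∫ s in (-n)..n, (f (Complex.exp (s + θ * I)) - f (Complex.exp (s + (-θ : ℝ) * I)))

lemma truncGammaIntegral_congr (h : EqOn f g (gammaContour θ)) (n : ℝ) :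
    truncGammaIntegral θ n f = truncGammaIntegral θ n g :=
  intervalIntegral.integral_congr fun s _ => by
    simp only [h (exp_mem_gammaContour s rfl), h (exp_mem_gammaContour s (abs_neg θ))]

lemma truncGammaIntegral_sub (hf : ContinuousOn f (gammaContour θ))
    (hg : ContinuousOn g (gammaContour θ)) (n : ℝ) :
    truncGammaIntegral θ n (fun z => f z - g z) =
      truncGammaIntegral θ n f - truncGammaIntegral θ n g := by
  have hcont : ∀ k : ℂ → F, ContinuousOn k (gammaContour θ) →
      Continuous fun s : ℝ => k (Complex.exp (s + θ * I)) - k (Complex.exp (s + (-θ : ℝ) * I)) :=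
    fun k hk =>
      (hk.comp_continuous (by fun_prop) fun s => exp_mem_gammaContour s rfl).sub
        (hk.comp_continuous (by fun_prop) fun s => exp_mem_gammaContour s (abs_neg θ))
  unfold truncGammaIntegral
  rw [← intervalIntegral.integral_sub ((hcont f hf).intervalIntegrable _ _)
    ((hcont g hg).intervalIntegrable _ _)]
  exact intervalIntegral.integral_congr fun s _ => sub_sub_sub_comm _ _ _ _

lemma truncGammaIntegral_comp_neg (θ n : ℝ) (f : ℂ → F) :
    truncGammaIntegral θ n (fun z => f (-z)) = truncGammaIntegral (θ - Real.pi) n f := by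
  have hup : ∀ s : ℝ, -Complex.exp (s + θ * I) = Complex.exp (s + (θ - Real.pi : ℝ) * I) :=
    fun s => by
      rw [← Complex.exp_sub_pi_mul_I]
      push_cast
      ring_nf
  have hdown : ∀ s : ℝ,
      -Complex.exp (s + (-θ : ℝ) * I) = Complex.exp (s + (-(θ - Real.pi) : ℝ) * I) :=
    fun s => by
      rw [← Complex.exp_add_pi_mul_I]
      push_cast
      ring_nf
  simp only [truncGammaIntegral, hup, hdown]

lemma tendsto_truncGammaIntegral_id_smul (hf : GammaIntegrable θ f) :
    Tendsto (fun n => truncGammaIntegral θ n fun z => z • f z) atTop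
      (𝓝 (gammaIntegral θ f)) := by
  have hup := (hf θ rfl).smul (Complex.exp (θ * I))
  have hdown := (hf (-θ) (abs_neg θ)).smul (Complex.exp ((-θ : ℝ) * I))
  have hlim := tendsto_intervalIntegral_exp_smul (hup.sub hdown)
  rw [show gammaIntegral θ f = _ from (integral_sub hup hdown).symm]
  refine hlim.congr fun n => intervalIntegral.integral_congr fun s _ => ?_
  simp only [Pi.sub_apply, Pi.smul_apply, ← Complex.coe_smul, smul_sub, smul_smul,
    Complex.ofReal_exp, ← Complex.exp_add]

lemma abs_le_abs_of_mem_uIcc_neg {u : ℝ} (hu : u ∈ uIcc (-φ) φ) : |u| ≤ |φ| := by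
  rcases mem_uIcc.1 hu with ⟨h₁, h₂⟩ | ⟨h₁, h₂⟩
  · exact abs_le_abs h₂ (neg_le.1 h₁)
  · rw [← abs_neg φ]
    exact abs_le_abs h₂ (neg_le_neg h₁)

lemma tendsto_intervalIntegral_vertical [CompleteSpace F] {l : Filter ℝ}
    [l.IsCountablyGenerated] {c : F} (hg : ContinuousOn g {w | |w.im| ≤ |φ|})
    (hlim : Tendsto g (comap re l ⊓ 𝓟 {w | |w.im| ≤ |φ|}) (𝓝 c)) :
    Tendsto (fun x : ℝ => ∫ u in (-φ)..φ, g (x + u * I)) l (𝓝 ((2 * φ) • c)) := by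
  have hstrip : ∀ x : ℝ, ∀ u ∈ uIcc (-φ) φ, (x + u * I : ℂ) ∈ {w : ℂ | |w.im| ≤ |φ|} := by
    intro x u hu
    simpa using abs_le_abs_of_mem_uIcc_neg hu
  have hunif : TendstoUniformlyOn (fun (x u : ℝ) => g (x + u * I)) (fun _ => c) l
      (uIcc (-φ) φ) := by
    rw [← tendsto_prod_principal_iff]
    refine hlim.comp (tendsto_inf.2 ⟨tendsto_comap_iff.2 ?_, tendsto_principal.2 ?_⟩)
    · simpa [Function.comp_def] using tendsto_fst (f := l) (g := 𝓟 (uIcc (-φ) φ))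
    · exact eventually_prod_principal_iff.2 (.of_forall hstrip)
  have := hunif.tendsto_intervalIntegral_of_continuousOn (μ := volume)
    (.of_forall fun x => hg.comp (by fun_prop) (hstrip x))
  rwa [intervalIntegral.integral_const, sub_neg_eq_add, ← two_mul] at this

lemma tendsto_intervalIntegral_sub_of_differentiableOn_strip [CompleteSpace F] {a b : F}
    (hg : DifferentiableOn ℂ g {w | |w.im| ≤ |φ|})
    (hleft : Tendsto g (comap re atBot ⊓ 𝓟 {w | |w.im| ≤ |φ|}) (𝓝 a))
    (hright : Tendsto g (comap re atTop ⊓ 𝓟 {w | |w.im| ≤ |φ|}) (𝓝 b)) :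
    Tendsto (fun n : ℝ => ∫ s in (-n)..n, (g (s + φ * I) - g (s + (-φ : ℝ) * I))) atTop
      (𝓝 ((2 * φ * I) • (b - a))) := by
  have hline : ∀ ψ : ℝ, |ψ| ≤ |φ| → Continuous fun s : ℝ => g (s + ψ * I) := fun ψ hψ =>
    hg.continuousOn.comp_continuous (by fun_prop) fun s => by simpa using hψ
  have hcauchy : ∀ n : ℝ, ∫ s in (-n)..n, (g (s + φ * I) - g (s + (-φ : ℝ) * I)) =
      I • ((∫ u in (-φ)..φ, g (n + u * I)) - ∫ u in (-φ)..φ, g ((-n : ℝ) + u * I)) := by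
    intro n
    have hrect := Complex.integral_boundary_rect_eq_zero_of_differentiableOn g
      ⟨-n, -φ⟩ ⟨n, φ⟩ (hg.mono fun w hw => abs_le_abs_of_mem_uIcc_neg hw.2)
    rw [intervalIntegral.integral_sub ((hline φ le_rfl).intervalIntegrable _ _)
      ((hline (-φ) (abs_neg φ).le).intervalIntegrable _ _), smul_sub, ← sub_eq_zero,
      ← neg_eq_zero, ← hrect]
    abel
  have hlim := ((tendsto_intervalIntegral_vertical hg.continuousOn hright).sub
    ((tendsto_intervalIntegral_vertical hg.continuousOn hleft).comp
      tendsto_neg_atTop_atBot)).const_smul I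
  convert hlim using 2
  · exact hcauchy _
  · rw [← smul_sub, ← Complex.coe_smul, smul_smul]
    push_cast
    rw [mul_comm]

/-- Of the two vertical sides of the strip `|Im w| ≤ |φ|` in the coordinate `z = e^w`, only the one
tending to the vertex `z = 0` survives in the limit. -/
lemma tendsto_truncGammaIntegral_of_differentiableOn [CompleteSpace F] (hθ : θ < Real.pi)
    (hφ : |φ| ≤ θ) (hf : DifferentiableOn ℂ f (Sector θ))
    (hinf : Tendsto f (cobounded ℂ ⊓ 𝓟 (Sector θ)) (𝓝 0)) :
    Tendsto (fun n => truncGammaIntegral φ n f) atTop (𝓝 (-(2 * φ * I) • f 0)) := by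
  have hexp : MapsTo Complex.exp {w | |w.im| ≤ |φ|} (Sector θ) :=
    fun w hw => exp_mem_sector hθ (le_trans hw hφ)
  have hzero := hf.continuousOn 0 (zero_mem_sector ((abs_nonneg φ).trans hφ))
  have hlim := tendsto_intervalIntegral_sub_of_differentiableOn_strip
    (hf.comp Complex.differentiable_exp.differentiableOn hexp)
    (hzero.tendsto.comp (Complex.tendsto_exp_comap_re_atBot.inf hexp.tendsto))
    (hinf.comp (Complex.tendsto_exp_comap_re_atTop.inf hexp.tendsto))
  rwa [zero_sub, smul_neg, ← neg_smul] at hlim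

end Contours

namespace IsResolventAt

variable {A B : E →ₗ.[ℂ] E} {P Q P₀ Q₀ C : E →L[ℂ] E} {lam mu z : ℂ}

lemma sub_eq (hP : IsResolventAt A lam P) (hQ : IsResolventAt A mu Q) :
    P - Q = (mu - lam) • (P * Q) := by
  ext y
  have hy : A ⟨Q y, hQ.mem y⟩ + lam • Q y = y - (mu - lam) • Q y := by
    rw [eq_sub_of_add_eq (hQ.right_inv y)]
    module
  have hPy := hP.left_inv ⟨Q y, hQ.mem y⟩
  rw [hy, map_sub, map_smul] at hPy
  exact sub_eq_of_eq_add' (eq_add_of_sub_eq hPy)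

lemma injective (hP : IsResolventAt A lam P) : Function.Injective P := by
  intro y y' h
  rw [← hP.right_inv y, ← hP.right_inv y']
  simp only [h]

lemma exists_apply_eq (hP : IsResolventAt A 0 P) {x u : E} (hx : x = P u) :
    ∃ h : x ∈ A.domain, A ⟨x, h⟩ = u := by
  subst hx
  exact ⟨hP.mem u, by simpa only [zero_smul, add_zero] using hP.right_inv u⟩

/-- Each resolvent `Q` of `A` is `u⁻¹ P` for the unit `u = 1 + (μ - λ) P`, with inverse
`1 + (λ - μ) Q`. -/
lemma commute_of_commute (hP : IsResolventAt A lam P) (hQ : IsResolventAt A mu Q)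
    (hC : Commute P C) : Commute Q C := by
  have hPQ : (1 + (mu - lam) • P) * Q = P := by
    rw [add_mul, one_mul, smul_mul_assoc, ← hP.sub_eq hQ, add_sub_cancel]
  have hQP : (1 + (lam - mu) • Q) * P = Q := by
    rw [add_mul, one_mul, smul_mul_assoc, ← hQ.sub_eq hP, add_sub_cancel]
  let u : (E →L[ℂ] E)ˣ :=
    { val := 1 + (mu - lam) • P
      inv := 1 + (lam - mu) • Q
      val_inv := by rw [mul_add, mul_one, mul_smul_comm, hPQ]; module
      inv_val := by rw [mul_add, mul_one, mul_smul_comm, hQP]; module }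
  have hu : Commute (u : E →L[ℂ] E) C := (Commute.one_left C).add_left (hC.smul_left _)
  rw [← hQP]
  exact hu.units_inv_left.mul_left hC

lemma apply_sub_smul (hP₀ : IsResolventAt A 0 P₀) (hP : IsResolventAt A lam P) (y : E) :
    P₀ (y - lam • P y) = P y := by
  have h : P₀ y - P y = (lam - 0) • P₀ (P y) := DFunLike.congr_fun (hP₀.sub_eq hP) y
  rw [map_sub, map_smul, ← sub_zero lam, ← h, sub_sub_cancel]

lemma smul_add_mul_mul (hP₀ : IsResolventAt A 0 P₀) (hP : IsResolventAt A (-z) P)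
    (hQ₀ : IsResolventAt B 0 Q₀) (hQ : IsResolventAt B z Q) (hc : Commute Q₀ P) :
    z • ((P₀ + Q₀) * (P * Q)) = P * Q₀ - P₀ * Q := by
  have hP' : z • (P₀ * P) = P - P₀ := by
    rw [← neg_sub, hP₀.sub_eq hP, sub_zero, neg_smul, neg_neg]
  have hQ' : z • (Q₀ * Q) = Q₀ - Q := by rw [hQ₀.sub_eq hQ, sub_zero]
  calc z • ((P₀ + Q₀) * (P * Q)) = z • (P₀ * P) * Q + P * z • (Q₀ * Q) := by
        rw [add_mul, ← mul_assoc, ← mul_assoc Q₀, hc.eq, smul_add, smul_mul_assoc,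
          mul_smul_comm, mul_assoc P]
    _ = P * Q₀ - P₀ * Q := by rw [hP', hQ', sub_mul, mul_sub]; abel

/-- Multiplying `A x + B x = y` by `A⁻¹ B⁻¹` loses nothing once `x` lies in one of the two
domains. -/
lemma exists_add_eq_of_mem_range (hP : IsResolventAt A 0 P) (hQ : IsResolventAt B 0 Q)
    (hPQ : Commute P Q) {x y : E} (h : P x + Q x = P (Q y)) (hx : x ∈ range Q) :
    ∃ (hxA : x ∈ A.domain) (hxB : x ∈ B.domain), A ⟨x, hxA⟩ + B ⟨x, hxB⟩ = y := by
  obtain ⟨v, rfl⟩ := hx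
  have hcomm : ∀ u, P (Q u) = Q (P u) := DFunLike.congr_fun hPQ.eq
  have hQv : Q v = P (y - v) := hQ.injective <| by
    rw [map_sub, map_sub, ← hcomm, ← hcomm, ← h, add_sub_cancel_left]
  obtain ⟨hxA, hA⟩ := hP.exists_apply_eq hQv
  obtain ⟨hxB, hB⟩ := hQ.exists_apply_eq (rfl : Q v = Q v)
  exact ⟨hxA, hxB, by rw [hA, hB, sub_add_cancel]⟩

end IsResolventAt

section InterpolationSpace

variable {A : E →ₗ.[ℂ] E} {θ p s t : ℝ} {x : E}

lemma interpK_nonneg (ht : 0 ≤ t) (x : E) : 0 ≤ interpK A t x :=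
  Real.iInf_nonneg fun _ => by positivity

lemma interpK_mono (hs : 0 ≤ s) (hst : s ≤ t) (x : E) : interpK A s x ≤ interpK A t x :=
  ciInf_mono ⟨0, by rintro _ ⟨w, rfl⟩; positivity⟩ fun w => by gcongr

/-- Membership in the real interpolation space `(E, 𝒟(A))_{θ,∞}`. -/
def MemInterpTop (A : E →ₗ.[ℂ] E) (θ : ℝ) (x : E) : Prop :=
  ∃ C, ∀ t, 0 < t → interpK A t x ≤ C * t ^ θ

lemma ofReal_rpow_interpK_le_lintegral (hθ : 0 ≤ θ) (hp : 0 ≤ p) (ht : 0 < t) (x : E) :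
    ENNReal.ofReal (((2 * t) ^ (-θ) * interpK A t x) ^ p / 2) ≤
      ∫⁻ s in Ioi (0 : ℝ), ENNReal.ofReal ((s ^ (-θ) * interpK A s x) ^ p / s) := by
  have hK := interpK_nonneg (A := A) ht.le x
  set a := ((2 * t) ^ (-θ) * interpK A t x) ^ p
  have ha : ∀ s ∈ Ioc t (2 * t), a / (2 * t) ≤ (s ^ (-θ) * interpK A s x) ^ p / s := by
    intro s hs
    have hs₀ : 0 < s := ht.trans hs.1
    have hKs := interpK_nonneg (A := A) hs₀.le x
    refine div_le_div₀ (by positivity) (Real.rpow_le_rpow (by positivity) ?_ hp) hs₀ hs.2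
    exact mul_le_mul (Real.rpow_le_rpow_of_nonpos hs₀ hs.2 (neg_nonpos.2 hθ))
      (interpK_mono ht.le hs.1.le x) hK (by positivity)
  calc ENNReal.ofReal (a / 2) = ENNReal.ofReal (a / (2 * t)) * volume (Ioc t (2 * t)) := by
        rw [Real.volume_Ioc, ← ENNReal.ofReal_mul (by positivity)]
        congr 1
        field_simp
        ring
    _ = ∫⁻ _ in Ioc t (2 * t), ENNReal.ofReal (a / (2 * t)) := (setLIntegral_const _ _).symm
    _ ≤ ∫⁻ s in Ioc t (2 * t), ENNReal.ofReal ((s ^ (-θ) * interpK A s x) ^ p / s) :=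
        setLIntegral_mono' measurableSet_Ioc fun s hs => ENNReal.ofReal_le_ofReal (ha s hs)
    _ ≤ _ := lintegral_mono_set fun s hs => ht.trans hs.1

lemma MemInterp.memInterpTop (h : MemInterp A θ p x) (hθ : 0 ≤ θ) (hp : 0 < p) :
    MemInterpTop A θ x := by
  set M := ∫⁻ t in Ioi (0 : ℝ), ENNReal.ofReal ((t ^ (-θ) * interpK A t x) ^ p / t)
  refine ⟨(M.toReal * 2) ^ p⁻¹ * 2 ^ θ, fun t ht => ?_⟩
  have hK := interpK_nonneg (A := A) ht.le x
  have hpow : ((2 * t) ^ (-θ) * interpK A t x) ^ p ≤ M.toReal * 2 := by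
    rw [← div_le_iff₀ two_pos, ← ENNReal.ofReal_le_iff_le_toReal (ne_of_lt h)]
    exact ofReal_rpow_interpK_le_lintegral hθ hp.le ht x
  rw [← Real.le_rpow_inv_iff_of_pos (by positivity) (by positivity) hp,
    Real.rpow_neg (by positivity), inv_mul_le_iff₀ (by positivity),
    Real.mul_rpow two_pos.le ht.le] at hpow
  linarith

end InterpolationSpace

namespace IsSectorial

variable {A : E →ₗ.[ℂ] E} {θ K : ℝ} {R : ℂ → E →L[ℂ] E}

lemma bound_nonneg (h : IsSectorial A θ R K) : 0 ≤ K := zero_le_one.trans h.one_le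

lemma norm_le_div (h : IsSectorial A θ R K) {z : ℂ} (hz : z ∈ Sector θ) :
    ‖R z‖ ≤ K / (1 + ‖z‖) :=
  (le_div_iff₀' (by positivity)).2 (h.bound z hz)

lemma norm_le (h : IsSectorial A θ R K) {z : ℂ} (hz : z ∈ Sector θ) : ‖R z‖ ≤ K :=
  (h.norm_le_div hz).trans (div_le_self h.bound_nonneg (by simp))

lemma tendsto_cobounded (h : IsSectorial A θ R K) :
    Tendsto R (cobounded ℂ ⊓ 𝓟 (Sector θ)) (𝓝 0) := by
  have hdecay : Tendsto (fun z : ℂ => K / (1 + ‖z‖)) (cobounded ℂ) (𝓝 0) :=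
    (tendsto_atTop_add_const_left _ _ tendsto_norm_cobounded_atTop).const_div_atTop K
  exact squeeze_zero_norm' (eventually_inf_principal.2 (.of_forall fun z hz => h.norm_le_div hz))
    (hdecay.mono_left inf_le_left)

lemma continuousOn (h : IsSectorial A θ R K) : ContinuousOn R (Sector θ) := by
  have hlip : LipschitzOnWith (Real.toNNReal (K * K)) R (Sector θ) := by
    refine LipschitzOnWith.of_dist_le' fun z hz w hw => ?_
    rw [dist_eq_norm, (h.res z hz).sub_eq (h.res w hw), norm_smul, dist_comm, dist_eq_norm,
      mul_comm]
    gcongr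
    exact (norm_mul_le _ _).trans
      (mul_le_mul (h.norm_le hz) (h.norm_le hw) (norm_nonneg _) h.bound_nonneg)
  exact hlip.continuousOn

lemma differentiableOn (h : IsSectorial A θ R K) : DifferentiableOn ℂ R (Sector θ) := by
  intro w hw
  have hderiv : HasDerivWithinAt R (-(R w * R w)) (Sector θ) w := by
    rw [hasDerivWithinAt_iff_tendsto_slope]
    have hlim : Tendsto (fun z => -(R z * R w)) (𝓝[Sector θ \ {w}] w) (𝓝 (-(R w * R w))) :=
      (((h.continuousOn w hw).mono_left (nhdsWithin_mono _ sdiff_subset)).mul_const _).neg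
    refine hlim.congr' ?_
    filter_upwards [self_mem_nhdsWithin] with z hz
    rw [slope_def_module, (h.res z hz.1).sub_eq (h.res w hw), smul_smul, ← neg_sub z w,
      mul_neg, inv_mul_cancel₀ (sub_ne_zero.2 hz.2), neg_smul, one_smul]
  exact hderiv.differentiableWithinAt

lemma norm_smul_apply_le (h : IsSectorial A θ R K) {z : ℂ} (hz : z ∈ Sector θ) (x : E) :
    ‖z • R z x‖ ≤ K * ‖x‖ := by
  rw [← smul_apply]
  refine (z • R z).le_of_opNorm_le ?_ x
  rw [norm_smul]
  exact (mul_le_mul_of_nonneg_right (by simp) (norm_nonneg _)).trans (h.bound z hz)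

lemma norm_sub_smul_le_interpK (h : IsSectorial A θ R K) {z : ℂ} (hz : z ∈ Sector θ) (y : E) :
    ‖y - z • R z y‖ ≤ (1 + K) * interpK A (1 + ‖z‖)⁻¹ y := by
  have hK := h.bound_nonneg
  rw [← div_le_iff₀' (by positivity)]
  refine le_ciInf fun w => ?_
  rw [div_le_iff₀' (by positivity)]
  have hsplit : y - z • R z y = (y - w) - z • R z (y - w) + R z (A w) := by
    have hw := (h.res z hz).left_inv w
    rw [map_add, map_smul] at hw
    rw [map_sub, eq_sub_of_add_eq hw]
    module
  have hAw : ‖R z (A w)‖ ≤ K / (1 + ‖z‖) * ‖A w‖ :=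
    (R z).le_of_opNorm_le (h.norm_le_div hz) _
  rw [hsplit]
  calc ‖(y - w) - z • R z (y - w) + R z (A w)‖
      ≤ ‖y - w‖ + ‖z • R z (y - w)‖ + ‖R z (A w)‖ :=
        (norm_add_le _ _).trans (by gcongr; exact norm_sub_le _ _)
    _ ≤ ‖y - w‖ + K * ‖y - w‖ + K / (1 + ‖z‖) * ‖A w‖ := by
        gcongr
        exact h.norm_smul_apply_le hz _
    _ = (1 + K) * ‖y - w‖ + K * ((1 + ‖z‖)⁻¹ * ‖A w‖) := by ring
    _ ≤ (1 + K) * ‖y - w‖ + (1 + K) * ((1 + ‖z‖)⁻¹ * (‖(w : E)‖ + ‖A w‖)) := by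
        gcongr <;> linarith [norm_nonneg (w : E)]
    _ = (1 + K) * (‖y - w‖ + (1 + ‖z‖)⁻¹ * (‖(w : E)‖ + ‖A w‖)) := by ring

lemma exists_norm_sub_smul_le {δ : ℝ} {y : E} (h : IsSectorial A θ R K)
    (hy : MemInterpTop A δ y) :
    ∃ C, ∀ z ∈ Sector θ, ‖y - z • R z y‖ ≤ C * (1 + ‖z‖) ^ (-δ) := by
  obtain ⟨C, hC⟩ := hy
  have hK := h.bound_nonneg
  refine ⟨(1 + K) * C, fun z hz => ?_⟩
  calc ‖y - z • R z y‖ ≤ (1 + K) * interpK A (1 + ‖z‖)⁻¹ y := h.norm_sub_smul_le_interpK hz y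
    _ ≤ (1 + K) * (C * (1 + ‖z‖)⁻¹ ^ δ) := by
        gcongr
        exact hC _ (by positivity)
    _ = (1 + K) * C * (1 + ‖z‖) ^ (-δ) := by
        rw [Real.inv_rpow (by positivity), Real.rpow_neg (by positivity), mul_assoc]

lemma tendsto_truncGammaIntegral [CompleteSpace E] {φ : ℝ} (h : IsSectorial A θ R K)
    (hθ : θ < Real.pi) (hφ : |φ| ≤ θ) (y : E) :
    Tendsto (fun n => truncGammaIntegral φ n fun z => R z y) atTop
      (𝓝 (-(2 * φ * I) • R 0 y)) := by
  refine tendsto_truncGammaIntegral_of_differentiableOn hθ hφ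
    (h.differentiableOn.clm_apply (differentiableOn_const y)) ?_
  simpa only [Function.comp_def, ContinuousLinearMap.apply_apply, zero_apply] using
    ((ContinuousLinearMap.apply ℂ E y).continuous.tendsto 0).comp h.tendsto_cobounded

end IsSectorial

lemma ResolventCommuting.commute {A B : E →ₗ.[ℂ] E} {RA RB : ℂ → E →L[ℂ] E}
    {θA θB KA KB : ℝ} {z w : ℂ} (h : ResolventCommuting RA RB θA θB)
    (hA : IsSectorial A θA RA KA) (hB : IsSectorial B θB RB KB) (hz : z ∈ Sector θA)
    (hw : w ∈ Sector θB) : Commute (RA z) (RB w) := by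
  obtain ⟨lam, hlam, mu, hmu, hc⟩ := h
  have hz' : Commute (RA z) (RB mu) := (hA.res lam hlam).commute_of_commute (hA.res z hz) hc
  exact ((hB.res mu hmu).commute_of_commute (hB.res w hw) hz'.symm).symm

lemma Kop_mem_range [CompleteSpace E] {RA RB : ℂ → E →L[ℂ] E} {T : E →L[ℂ] E} {θ : ℝ}
    {g : ℂ → E} {y : E} (hg : GammaIntegrable θ g)
    (hT : ∀ z ∈ gammaContour θ, RA (-z) (RB z y) = T (g z)) : Kop RA RB θ y ∈ range T :=
  ⟨(2 * Real.pi * I : ℂ)⁻¹ • gammaIntegral θ g, by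
    rw [map_smul, map_gammaIntegral T hg, Kop, gammaIntegral_congr hT]⟩

/-- The standing hypotheses on a parabolic pair: `A` and `B` are resolvent commuting operators of
classes `𝒫(θ_A)` and `𝒫(θ_B)`, with angles below `π` and `θ_A + θ_B > π`, so that `Γ_{θ_B}` lies
in `S_{θ_B}` and its reflection `-Γ_{θ_B}` in `S_{θ_A}`. -/
structure IsParabolicPair (A B : E →ₗ.[ℂ] E) (RA RB : ℂ → E →L[ℂ] E) (θA θB KA KB : ℝ) :
    Prop where
  left : IsSectorial A θA RA KA
  right : IsSectorial B θB RB KB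
  comm : ResolventCommuting RA RB θA θB
  angle_left : θA < Real.pi
  angle_right : θB < Real.pi
  pi_lt_add : Real.pi < θA + θB

namespace IsParabolicPair

variable {A B : E →ₗ.[ℂ] E} {RA RB : ℂ → E →L[ℂ] E} {θA θB KA KB δ : ℝ} {z : ℂ} {y : E}

lemma angle_left_pos (h : IsParabolicPair A B RA RB θA θB KA KB) : 0 < θA := by
  linarith [h.angle_right, h.pi_lt_add]

lemma angle_right_pos (h : IsParabolicPair A B RA RB θA θB KA KB) : 0 < θB := by
  linarith [h.angle_left, h.pi_lt_add]

lemma zero_mem_left (h : IsParabolicPair A B RA RB θA θB KA KB) : (0 : ℂ) ∈ Sector θA :=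
  zero_mem_sector h.angle_left_pos.le

lemma zero_mem_right (h : IsParabolicPair A B RA RB θA θB KA KB) : (0 : ℂ) ∈ Sector θB :=
  zero_mem_sector h.angle_right_pos.le

lemma res_left_zero (h : IsParabolicPair A B RA RB θA θB KA KB) : IsResolventAt A 0 (RA 0) :=
  h.left.res 0 h.zero_mem_left

lemma res_right_zero (h : IsParabolicPair A B RA RB θA θB KA KB) : IsResolventAt B 0 (RB 0) :=
  h.right.res 0 h.zero_mem_right

lemma commute (h : IsParabolicPair A B RA RB θA θB KA KB) (hz : z ∈ Sector θA)
    {w : ℂ} (hw : w ∈ Sector θB) : Commute (RA z) (RB w) :=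
  h.comm.commute h.left h.right hz hw

lemma apply_comm (h : IsParabolicPair A B RA RB θA θB KA KB) (hz : z ∈ Sector θA)
    {w : ℂ} (hw : w ∈ Sector θB) (y : E) : RA z (RB w y) = RB w (RA z y) :=
  DFunLike.congr_fun (h.commute hz hw).eq y

lemma commute_zero (h : IsParabolicPair A B RA RB θA θB KA KB) : Commute (RA 0) (RB 0) :=
  h.commute h.zero_mem_left h.zero_mem_right

lemma gammaContour_subset (h : IsParabolicPair A B RA RB θA θB KA KB) :
    gammaContour θB ⊆ Sector θB :=
  gammaContour_subset_sector h.angle_right_pos.le h.angle_right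

lemma neg_mem_sector (h : IsParabolicPair A B RA RB θA θB KA KB) (hz : z ∈ gammaContour θB) :
    -z ∈ Sector θA :=
  neg_mem_sector_of_mem_gammaContour
    ((abs_of_pos h.angle_right_pos).trans_lt h.angle_right) h.pi_lt_add.le hz

lemma continuousOn_left_neg (h : IsParabolicPair A B RA RB θA θB KA KB) :
    ContinuousOn (fun z => RA (-z)) (gammaContour θB) :=
  h.left.continuousOn.comp (by fun_prop) fun _ => h.neg_mem_sector

lemma continuousOn_right (h : IsParabolicPair A B RA RB θA θB KA KB) :
    ContinuousOn RB (gammaContour θB) :=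
  h.right.continuousOn.mono h.gammaContour_subset

lemma norm_left_neg_le (h : IsParabolicPair A B RA RB θA θB KA KB) (hz : z ∈ gammaContour θB) :
    ‖RA (-z)‖ ≤ KA / (1 + ‖z‖) := by
  simpa only [norm_neg] using h.left.norm_le_div (h.neg_mem_sector hz)

lemma norm_right_le (h : IsParabolicPair A B RA RB θA θB KA KB) (hz : z ∈ gammaContour θB) :
    ‖RB z‖ ≤ KB / (1 + ‖z‖) :=
  h.right.norm_le_div (h.gammaContour_subset hz)

lemma gammaIntegrable (h : IsParabolicPair A B RA RB θA θB KA KB) (y : E) :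
    GammaIntegrable θB fun z => RA (-z) (RB z y) := by
  refine .clm_apply (C := KB * ‖y‖) one_pos h.continuousOn_left_neg
    (h.continuousOn_right.clm_apply continuousOn_const) (fun _ => h.norm_left_neg_le)
    fun z hz => ?_
  refine ((RB z).le_of_opNorm_le (h.norm_right_le hz) y).trans_eq ?_
  rw [Real.rpow_neg_one, div_mul_eq_mul_div, div_eq_mul_inv]

lemma smul_add_apply (h : IsParabolicPair A B RA RB θA θB KA KB) (hz : z ∈ gammaContour θB)
    (y : E) :
    z • (RA 0 + RB 0) (RA (-z) (RB z y)) = RA (-z) (RB 0 y) - RB z (RA 0 y) := by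
  have hzA := h.neg_mem_sector hz
  have hzB := h.gammaContour_subset hz
  rw [← h.apply_comm h.zero_mem_left hzB]
  exact DFunLike.congr_fun (h.res_left_zero.smul_add_mul_mul (h.left.res _ hzA)
    h.res_right_zero (h.right.res _ hzB)
    (h.commute hzA h.zero_mem_right).symm) y

lemma gammaIntegral_add_apply [CompleteSpace E] (h : IsParabolicPair A B RA RB θA θB KA KB)
    (y : E) :
    gammaIntegral θB (fun z => (RA 0 + RB 0) (RA (-z) (RB z y))) =
      (2 * Real.pi * I : ℂ) • RA 0 (RB 0 y) := by
  have hleft : Tendsto (fun n => truncGammaIntegral θB n fun z => RA (-z) (RB 0 y)) atTop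
      (𝓝 (-(2 * (θB - Real.pi : ℝ) * I) • RA 0 (RB 0 y))) := by
    simp only [truncGammaIntegral_comp_neg θB _ fun z => RA z (RB 0 y)]
    exact h.left.tendsto_truncGammaIntegral h.angle_left
      (abs_le.2 ⟨by linarith [h.pi_lt_add], by linarith [h.angle_right, h.angle_left_pos]⟩) _
  have hright : Tendsto (fun n => truncGammaIntegral θB n fun z => RB z (RA 0 y)) atTop
      (𝓝 (-(2 * θB * I) • RA 0 (RB 0 y))) := by
    rw [h.apply_comm h.zero_mem_left h.zero_mem_right]
    exact h.right.tendsto_truncGammaIntegral h.angle_right (abs_of_pos h.angle_right_pos).le _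
  have hsplit : ∀ n, truncGammaIntegral θB n (fun z => RA (-z) (RB 0 y)) -
      truncGammaIntegral θB n (fun z => RB z (RA 0 y)) =
      truncGammaIntegral θB n fun z => z • (RA 0 + RB 0) (RA (-z) (RB z y)) := fun n => by
    rw [← truncGammaIntegral_sub (h.continuousOn_left_neg.clm_apply continuousOn_const)
      (h.continuousOn_right.clm_apply continuousOn_const)]
    exact truncGammaIntegral_congr (fun z hz => (h.smul_add_apply hz y).symm) n
  have hlim := (hleft.sub hright).congr hsplit
  rw [tendsto_nhds_unique (tendsto_truncGammaIntegral_id_smul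
    ((h.gammaIntegrable y).clm_comp (RA 0 + RB 0))) hlim, ← sub_smul]
  congr 1
  push_cast
  ring

lemma inv_add_inv_Kop [CompleteSpace E] (h : IsParabolicPair A B RA RB θA θB KA KB) (y : E) :
    RA 0 (Kop RA RB θB y) + RB 0 (Kop RA RB θB y) = RA 0 (RB 0 y) := by
  rw [← add_apply, Kop, map_smul, map_gammaIntegral _ (h.gammaIntegrable y),
    h.gammaIntegral_add_apply, inv_smul_smul₀ Complex.two_pi_I_ne_zero]

lemma Kop_mem_range_left [CompleteSpace E] (h : IsParabolicPair A B RA RB θA θB KA KB)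
    (hδ : 0 < δ) (hy : MemInterpTop A δ y) : Kop RA RB θB y ∈ range (RA 0) := by
  obtain ⟨C, hC⟩ := h.left.exists_norm_sub_smul_le hy
  have hint : GammaIntegrable θB fun z => RB z (y - (-z) • RA (-z) y) := by
    refine .clm_apply (C := C) hδ h.continuousOn_right
      (continuousOn_const.sub (continuousOn_neg.smul
        (h.continuousOn_left_neg.clm_apply continuousOn_const)))
      (fun _ => h.norm_right_le) fun z hz => ?_
    simpa only [norm_neg] using hC _ (h.neg_mem_sector hz)
  refine Kop_mem_range hint fun z hz => ?_
  have hz' := h.gammaContour_subset hz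
  calc RA (-z) (RB z y) = RB z (RA (-z) y) :=
        h.apply_comm (h.neg_mem_sector hz) hz' y
    _ = RB z (RA 0 (y - (-z) • RA (-z) y)) := by
        rw [h.res_left_zero.apply_sub_smul (h.left.res _ (h.neg_mem_sector hz))]
    _ = RA 0 (RB z (y - (-z) • RA (-z) y)) :=
        (h.apply_comm h.zero_mem_left hz' _).symm

lemma Kop_mem_range_right [CompleteSpace E] (h : IsParabolicPair A B RA RB θA θB KA KB)
    (hδ : 0 < δ) (hy : MemInterpTop B δ y) : Kop RA RB θB y ∈ range (RB 0) := by
  obtain ⟨C, hC⟩ := h.right.exists_norm_sub_smul_le hy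
  have hint : GammaIntegrable θB fun z => RA (-z) (y - z • RB z y) :=
    .clm_apply hδ h.continuousOn_left_neg
      (continuousOn_const.sub (continuousOn_id.smul
        (h.continuousOn_right.clm_apply continuousOn_const)))
      (fun _ => h.norm_left_neg_le) fun z hz => hC z (h.gammaContour_subset hz)
  refine Kop_mem_range hint fun z hz => ?_
  have hz' := h.neg_mem_sector hz
  calc RA (-z) (RB z y) = RA (-z) (RB 0 (y - z • RB z y)) := by
        rw [h.res_right_zero.apply_sub_smul (h.right.res _ (h.gammaContour_subset hz))]
    _ = RB 0 (RA (-z) (y - z • RB z y)) :=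
        h.apply_comm hz' h.zero_mem_right _

end IsParabolicPair

theorem Kop_mem_domain_of_memInterp_general
    [CompleteSpace E]
    {θA θB KA KB : ℝ} (hθA : θA < Real.pi) (hθB : θB < Real.pi) (hsum : Real.pi < θA + θB)
    {A B : E →ₗ.[ℂ] E} {RA RB : ℂ → E →L[ℂ] E}
    (hA : IsSectorial A θA RA KA) (hB : IsSectorial B θB RB KB)
    (hcomm : ResolventCommuting RA RB θA θB) {θ : ℝ} (hθ : 0 < θ)
    {y : E} (hy : MemInterpTop A θ y ∨ MemInterpTop B θ y) :
    ∃ (hxA : Kop RA RB θB y ∈ A.domain) (hxB : Kop RA RB θB y ∈ B.domain),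
      A ⟨Kop RA RB θB y, hxA⟩ + B ⟨Kop RA RB θB y, hxB⟩ = y := by
  have h : IsParabolicPair A B RA RB θA θB KA KB := ⟨hA, hB, hcomm, hθA, hθB, hsum⟩
  have hinv := h.inv_add_inv_Kop y
  rcases hy with hy | hy
  · rw [add_comm, h.apply_comm h.zero_mem_left h.zero_mem_right] at hinv
    obtain ⟨hxB, hxA, hsol⟩ := h.res_right_zero.exists_add_eq_of_mem_range h.res_left_zero
      h.commute_zero.symm hinv (h.Kop_mem_range_left hθ hy)
    exact ⟨hxA, hxB, by rw [add_comm, hsol]⟩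
  · exact h.res_left_zero.exists_add_eq_of_mem_range h.res_right_zero h.commute_zero hinv
      (h.Kop_mem_range_right hθ hy)

/-- If `y ∈ (E,𝒟(A))_{θ,p}` or `y ∈ (E,𝒟(B))_{θ,p}` for some `θ ∈ (0,1)`, `p ∈ [1,∞)`,
then `x = (1/(2πi)) ∫_{Γ_{θ_B}} (A-z)⁻¹(B+z)⁻¹ y dz` belongs to `𝒟(A) ∩ 𝒟(B)` and
`(A+B)x = y`. -/
theorem Kop_mem_domain_of_memInterp
    [CompleteSpace E]
    (θA θB KA KB : ℝ) (hθA : θA < Real.pi) (hBA : θB < θA) (hsum : Real.pi < θA + θB)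
    (A B : E →ₗ.[ℂ] E) (RA RB : ℂ → E →L[ℂ] E)
    (hA : IsSectorial A θA RA KA) (hB : IsSectorial B θB RB KB)
    (hcomm : ResolventCommuting RA RB θA θB)
    (θ p : ℝ) (hθ : θ ∈ Ioo (0 : ℝ) 1) (hp : 1 ≤ p)
    (y : E) (hy : MemInterp A θ p y ∨ MemInterp B θ p y) :
    ∃ (hxA : Kop RA RB θB y ∈ A.domain) (hxB : Kop RA RB θB y ∈ B.domain),
      A ⟨Kop RA RB θB y, hxA⟩ + B ⟨Kop RA RB θB y, hxB⟩ = y := by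
  have hp₀ : 0 < p := one_pos.trans_le hp
  exact Kop_mem_domain_of_memInterp_general hθA (hBA.trans hθA) hsum hA hB hcomm hθ.1
    (hy.imp (·.memInterpTop hθ.1.le hp₀) (·.memInterpTop hθ.1.le hp₀))

end
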